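/- Let d : ℕ → ℕ satisfy d(1) = 0 and, for every n ≥ 2, d(n) ≤ d(⌈n/2⌉) + 8·⌈⌈n/2⌉/6⌉. Then for every n ≥ 1, d(n) ≤ (4/3)·n + 8·⌈log₂ n⌉, where the inequality is understood in the rational numbers. -/

import Mathlib

/-!
Put `m = ⌈n / b⌉`. Since `b * (m - 1) ≤ n - 1`, we have `(b - 1) * (m - 1) ≤ n - m`, and therefore
`⌈m / k⌉ ≤ (m - 1) / k + 1 ≤ (n - m) / ((b - 1) * k) + 1`. The right-hand side is exactly the
decrease of the potential `n / ((b - 1) * k) + clog b n` from `n` to `m`, so `d` minus `c` times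
this potential can only grow along the iteration `n ↦ ⌈n / b⌉`, which ends at `1`.
-/

section CeilDiv

variable {b n : ℕ}

lemma one_le_ceilDiv (hb : 0 < b) (hn : 1 ≤ n) : 1 ≤ n ⌈/⌉ b := by
  rw [Nat.ceilDiv_eq_add_pred_div]
  exact (Nat.one_le_div_iff hb).2 (by lia)

lemma ceilDiv_lt_self (hb : 1 < b) (hn : 2 ≤ n) : n ⌈/⌉ b < n := by
  rw [Nat.ceilDiv_eq_add_pred_div]
  exact Nat.add_pred_div_lt hb hn

lemma clog_eq_clog_ceilDiv_add_one (hb : 1 < b) (hn : 2 ≤ n) :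
    Nat.clog b n = Nat.clog b (n ⌈/⌉ b) + 1 := by
  rw [Nat.ceilDiv_eq_add_pred_div]
  exact Nat.clog_of_two_le hb hn

lemma le_apply_one_of_le_apply_ceilDiv {α : Type*} [Preorder α] {f : ℕ → α} (hb : 1 < b)
    (hf : ∀ n, 2 ≤ n → f n ≤ f (n ⌈/⌉ b)) (hn : 1 ≤ n) : f n ≤ f 1 := by
  induction n using Nat.strong_induction_on with
  | _ n ih =>
    obtain rfl | hn2 := hn.eq_or_lt
    · exact le_rfl
    · exact (hf n hn2).trans (ih _ (ceilDiv_lt_self hb hn2) (one_le_ceilDiv (by lia) hn))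

end CeilDiv

section Field

variable {K : Type*} [Field K] [LinearOrder K] [IsStrictOrderedRing K] {b k : ℕ}

lemma cast_ceilDiv_le (hk : 0 < k) (m : ℕ) : ((m ⌈/⌉ k : ℕ) : K) ≤ ((m : K) - 1) / k + 1 := by
  have hk' : (0 : K) < k := by exact_mod_cast hk
  have hmul : m ⌈/⌉ k * k + 1 ≤ m + k := by
    have := Nat.div_mul_le_self (m + k - 1) k
    rw [Nat.ceilDiv_eq_add_pred_div]
    lia
  have hmul' : ((m ⌈/⌉ k : ℕ) : K) * k + 1 ≤ m + k := by exact_mod_cast hmul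
  rw [div_add_one hk'.ne', le_div_iff₀ hk']
  linarith

lemma cast_ceilDiv_sub_one_le (hb : 1 < b) (n : ℕ) :
    ((n ⌈/⌉ b : ℕ) : K) - 1 ≤ (n - (n ⌈/⌉ b : ℕ)) / (b - 1) := by
  have hb' : (1 : K) < b := by exact_mod_cast hb
  have hdiv : ((n ⌈/⌉ b : ℕ) : K) - 1 ≤ (n - 1) / b :=
    sub_le_iff_le_add.2 (cast_ceilDiv_le (by lia) n)
  rw [le_div_iff₀ (by linarith)] at hdiv ⊢
  linarith

lemma cast_ceilDiv_ceilDiv_le (hb : 1 < b) (hk : 0 < k) (n : ℕ) :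
    (((n ⌈/⌉ b) ⌈/⌉ k : ℕ) : K) ≤ (n - (n ⌈/⌉ b : ℕ)) / ((b - 1) * k) + 1 :=
  calc (((n ⌈/⌉ b) ⌈/⌉ k : ℕ) : K)
      ≤ (((n ⌈/⌉ b : ℕ) : K) - 1) / k + 1 := cast_ceilDiv_le hk _
    _ ≤ (n - (n ⌈/⌉ b : ℕ)) / (b - 1) / k + 1 := by
        gcongr
        exact cast_ceilDiv_sub_one_le hb n
    _ = (n - (n ⌈/⌉ b : ℕ)) / ((b - 1) * k) + 1 := by rw [div_div]

theorem stmt2_general {d : ℕ → K} {c : K} (hb : 1 < b) (hk : 0 < k) (hc : 0 ≤ c)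
    (hrec : ∀ n, 2 ≤ n → d n ≤ d (n ⌈/⌉ b) + c * ((n ⌈/⌉ b) ⌈/⌉ k : ℕ)) {n : ℕ} (hn : 1 ≤ n) :
    d n ≤ d 1 + c * ((n - 1) / ((b - 1) * k) + Nat.clog b n) := by
  let potential (n : ℕ) : K := n / ((b - 1) * k) + Nat.clog b n
  have hcost (n : ℕ) (hn : 2 ≤ n) :
      (((n ⌈/⌉ b) ⌈/⌉ k : ℕ) : K) ≤ potential n - potential (n ⌈/⌉ b) := by
    have hclog : (Nat.clog b n : K) = Nat.clog b (n ⌈/⌉ b) + 1 := by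
      exact_mod_cast clog_eq_clog_ceilDiv_add_one hb hn
    have hceil := cast_ceilDiv_ceilDiv_le (K := K) hb hk n
    rw [sub_div] at hceil
    simp only [potential]
    linarith
  have hstep (n : ℕ) (hn : 2 ≤ n) :
      d n - c * potential n ≤ d (n ⌈/⌉ b) - c * potential (n ⌈/⌉ b) := by
    have := mul_le_mul_of_nonneg_left (hcost n hn) hc
    linarith [hrec n hn]
  have hbound : d n - c * potential n ≤ d 1 - c * potential 1 :=
    le_apply_one_of_le_apply_ceilDiv (f := fun n ↦ d n - c * potential n) hb hstep hn
  calc d n ≤ d 1 + c * (potential n - potential 1) := by linarith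
    _ = d 1 + c * ((n - 1) / ((b - 1) * k) + Nat.clog b n) := by
        simp only [potential, Nat.clog_one_right, Nat.cast_one, Nat.cast_zero]
        ring

end Field

theorem stmt2 (d : ℕ → ℕ) (h1 : d 1 = 0)
    (hrec : ∀ n, 2 ≤ n → d n ≤ d ((n + 1) / 2) + 8 * (((n + 1) / 2 + 5) / 6)) :
    ∀ n, 1 ≤ n → (d n : ℚ) ≤ 4 / 3 * n + 8 * Nat.clog 2 n := by
  intro n hn
  -- `hrec` fits because `m ⌈/⌉ 2` and `m ⌈/⌉ 6` unfold to `(m + 1) / 2` and `(m + 5) / 6`.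
  have hbound := stmt2_general (d := fun n ↦ (d n : ℚ)) (b := 2) (k := 6) (c := 8)
    (by norm_num) (by norm_num) (by norm_num) (fun n hn ↦ by exact_mod_cast hrec n hn) hn
  simp only [h1, Nat.cast_zero, Nat.cast_ofNat] at hbound
  linarith
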